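/- If V is an irreducible quasi-finite module of non-zero level over an untwisted fgc EALA E_{n+1}, then up to a twist by an automorphism coming from the action of GL(n+1,ℤ), one may assume that K_0 acts by a non-zero scalar c_0 ≠ 0 while K_1,…,K_n act by zero (c_1 = … = c_n = 0). -/

import Mathlib

open scoped TensorProduct
open Function

noncomputable section

universe u v w

/-! ### Root spaces and triangular data for a finite-dimensional simple Lie algebra -/

/-- The root space of a linear functional `α` on a subalgebra `H` of `𝕘`. -/
def rootSpaceOf {𝕘 : Type u} [LieRing 𝕘] [LieAlgebra ℂ 𝕘]
    (H : LieSubalgebra ℂ 𝕘) (α : Module.Dual ℂ H) : Submodule ℂ 𝕘 where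
  carrier := {x | ∀ h : H, ⁅(h : 𝕘), x⁆ = α h • x}
  add_mem' := by
    intro a b ha hb
    simp only [Set.mem_setOf_eq] at *
    intro h
    rw [lie_add, ha h, hb h, smul_add]
  zero_mem' := by
    simp only [Set.mem_setOf_eq]
    intro h; simp
  smul_mem' := by
    intro c x hx
    simp only [Set.mem_setOf_eq] at *
    intro h
    rw [lie_smul, hx h, smul_comm]

/-- Triangular decomposition data for `𝕘`: a Cartan subalgebra `H`, a choice of
positive roots and corresponding coroots. -/
structure TriangularData (𝕘 : Type u) [LieRing 𝕘] [LieAlgebra ℂ 𝕘] where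
  H : LieSubalgebra ℂ 𝕘
  isCartan : H.IsCartanSubalgebra
  posRoots : Set (Module.Dual ℂ H)
  zero_not_mem : (0 : Module.Dual ℂ H) ∉ posRoots
  coroot : Module.Dual ℂ H → H

namespace TriangularData

variable {𝕘 : Type u} [LieRing 𝕘] [LieAlgebra ℂ 𝕘] (td : TriangularData 𝕘)

/-- The set `Δ_𝕘^×` of non-zero roots. -/
def roots : Set (Module.Dual ℂ td.H) := td.posRoots ∪ (fun α => -α) '' td.posRoots

/-- The nilpotent subalgebra `n⁺`, the span of the positive root spaces. -/
def nPlus : Submodule ℂ 𝕘 := ⨆ α ∈ td.posRoots, rootSpaceOf td.H α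

/-- The nilpotent subalgebra `n⁻`, the span of the negative root spaces. -/
def nMinus : Submodule ℂ 𝕘 := ⨆ α ∈ td.posRoots, rootSpaceOf td.H (-α)

/-- `λ ∈ P_𝕘⁺`: a dominant integral weight, i.e. `λ(α^∨) ∈ ℤ₊` for positive roots `α`. -/
def IsDominantIntegral (l : Module.Dual ℂ td.H) : Prop :=
  ∀ α ∈ td.posRoots, ∃ n : ℕ, l (td.coroot α) = (n : ℂ)

end TriangularData

/-! ### Untwisted fgc extended affine Lie algebras -/

/-- A realization of an untwisted fgc extended affine Lie algebra of nullity `n+1`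
(or of the toroidal Lie algebra `τ_{n+1}^tor`) inside a Lie algebra `E`:
`E = L(𝕘) ⊕ C ⊕ D` where `emb k x` is `x ⊗ t^k ∈ 𝕘 ⊗ A_{n+1}`, the subspace `C` is a
(non-zero) centre of the central extension `L(𝕘) ⊕ C` of the multiloop algebra with
`K 0, …, K n` spanning its degree-zero part, and `Dsub` is a graded subalgebra of the
skew-symmetric derivations of `A_{n+1}` containing the degree derivations `d 0, …, d n`.
`B` is the normalized invariant bilinear form of `𝕘`. -/
structure EALARealization (n : ℕ) (𝕘 : Type u) [LieRing 𝕘] [LieAlgebra ℂ 𝕘]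
    (E : Type v) [LieRing E] [LieAlgebra ℂ E] where
  B : 𝕘 →ₗ[ℂ] 𝕘 →ₗ[ℂ] ℂ
  B_ne_zero : B ≠ 0
  emb : (Fin (n + 1) → ℤ) → 𝕘 →ₗ[ℂ] E
  K : Fin (n + 1) → E
  d : Fin (n + 1) → E
  C : Submodule ℂ E
  Dsub : Submodule ℂ E
  C_ne_bot : C ≠ ⊥
  K_mem_C : ∀ i, K i ∈ C
  d_mem_Dsub : ∀ i, d i ∈ Dsub
  K_central : ∀ i (e : E), ⁅K i, e⁆ = 0
  C_bracket_loop : ∀ c ∈ C, ∀ (k : Fin (n + 1) → ℤ) (x : 𝕘), ⁅c, emb k x⁆ = 0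
  C_bracket_C : ∀ c ∈ C, ∀ c' ∈ C, ⁅c, c'⁆ = 0
  d_bracket_d : ∀ i j, ⁅d i, d j⁆ = 0
  d_bracket_emb : ∀ i (k : Fin (n + 1) → ℤ) (x : 𝕘),
    ⁅d i, emb k x⁆ = ((k i : ℂ)) • emb k x
  d_bracket_C : ∀ i, ∀ c ∈ C, ⁅d i, c⁆ ∈ C
  Dsub_bracket_C : ∀ dd ∈ Dsub, ∀ c ∈ C, ⁅dd, c⁆ ∈ C
  Dsub_bracket_Dsub : ∀ dd ∈ Dsub, ∀ dd' ∈ Dsub, ⁅dd, dd'⁆ ∈ Dsub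
  emb_bracket_mem : ∀ (k l : Fin (n + 1) → ℤ) (x y : 𝕘),
    ⁅emb k x, emb l y⁆ - emb (k + l) ⁅x, y⁆ ∈ C
  emb_bracket_opp : ∀ (k : Fin (n + 1) → ℤ) (x y : 𝕘),
    ⁅emb k x, emb (-k) y⁆ = emb 0 ⁅x, y⁆ + (B x y) • ∑ i, ((k i : ℂ)) • K i
  span_top : (⨆ k : Fin (n + 1) → ℤ, LinearMap.range (emb k)) ⊔ C ⊔ Dsub = ⊤

namespace EALARealization

variable {n : ℕ} {𝕘 : Type u} {E : Type v} [LieRing 𝕘] [LieAlgebra ℂ 𝕘]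
  [LieRing E] [LieAlgebra ℂ E]
variable (A : EALARealization n 𝕘 E)

/-- The multiloop part `𝕘 ⊗ A_{n+1}` of `E`. -/
def loopPart : Submodule ℂ E := ⨆ k : Fin (n + 1) → ℤ, LinearMap.range (A.emb k)

/-- The core `(E_{n+1})_c = L(𝕘) ⊕ C` of `E`. -/
def core : Submodule ℂ E := A.loopPart ⊔ A.C

/-- The homogeneous component of `E` of degree `k ∈ ℤ^{n+1}` (the simultaneous
eigenspace of the degree derivations `d 0, …, d n`). -/
def grade (k : Fin (n + 1) → ℤ) : Submodule ℂ E where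
  carrier := {e | ∀ i, ⁅A.d i, e⁆ = ((k i : ℂ)) • e}
  add_mem' := by
    intro a b ha hb
    simp only [Set.mem_setOf_eq] at *
    intro i
    rw [lie_add, ha i, hb i, smul_add]
  zero_mem' := by
    simp only [Set.mem_setOf_eq]
    intro i; simp
  smul_mem' := by
    intro c e he
    simp only [Set.mem_setOf_eq] at *
    intro i
    rw [lie_smul, he i, smul_comm]

/-- The homogeneous component `((E_{n+1})_c)_k` of the core. -/
def coreGrade (k : Fin (n + 1) → ℤ) : Submodule ℂ E := A.core ⊓ A.grade k

/-- The subalgebra `𝕙 ⊗ A_{n+1}` (for the triangular data `td`). -/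
def hLoop (td : TriangularData 𝕘) : Submodule ℂ E :=
  ⨆ k : Fin (n + 1) → ℤ, Submodule.map (A.emb k) td.H.toSubmodule

variable (V : Type w) [AddCommGroup V] [Module ℂ V] [LieRingModule E V] [LieModule ℂ E V]

/-- The simultaneous eigenspace `V_μ` of the degree derivations `d 0, …, d n`. -/
def dWeight (μ : Fin (n + 1) → ℂ) : Submodule ℂ V where
  carrier := {v | ∀ i, ⁅A.d i, v⁆ = μ i • v}
  add_mem' := by
    intro a b ha hb
    simp only [Set.mem_setOf_eq] at *
    intro i
    rw [lie_add, ha i, hb i, smul_add]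
  zero_mem' := by
    simp only [Set.mem_setOf_eq]
    intro i; simp
  smul_mem' := by
    intro c v hv
    simp only [Set.mem_setOf_eq] at *
    intro i
    rw [lie_smul, hv i, smul_comm]

/-- A quasi-finite module: the direct sum of its `D`-weight spaces, all of which are
finite-dimensional. -/
def IsQuasiFinite : Prop :=
  (⨆ μ : Fin (n + 1) → ℂ, A.dWeight V μ) = ⊤ ∧
    ∀ μ : Fin (n + 1) → ℂ, FiniteDimensional ℂ (A.dWeight V μ)

/-- A uniformly bounded submodule: the dimensions of its graded components are
bounded. -/
def IsUniformlyBoundedSub (W : Submodule ℂ V) : Prop :=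
  ∃ N : ℕ, ∀ μ : Fin (n + 1) → ℂ,
    Module.finrank ℂ ↥(W ⊓ A.dWeight V μ) ≤ N

/-- The `H`-weight space of `V` of weight `(η, c, m)`, where `η ∈ 𝕙^*` and `c, m` are
the eigenvalue tuples of `K 0, …, K n` and `d 0, …, d n` respectively. -/
def hWeightSp (td : TriangularData 𝕘)
    (η : Module.Dual ℂ td.H) (c m : Fin (n + 1) → ℂ) : Submodule ℂ V where
  carrier := {v | (∀ x : td.H, ⁅A.emb 0 (x : 𝕘), v⁆ = η x • v) ∧
    (∀ i, ⁅A.K i, v⁆ = c i • v) ∧ (∀ i, ⁅A.d i, v⁆ = m i • v)}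
  add_mem' := by
    intro a b ha hb
    simp only [Set.mem_setOf_eq] at *
    refine ⟨fun x => ?_, fun i => ?_, fun i => ?_⟩
    · rw [lie_add, ha.1 x, hb.1 x, smul_add]
    · rw [lie_add, ha.2.1 i, hb.2.1 i, smul_add]
    · rw [lie_add, ha.2.2 i, hb.2.2 i, smul_add]
  zero_mem' := by
    simp only [Set.mem_setOf_eq]
    exact ⟨fun x => by simp, fun i => by simp, fun i => by simp⟩
  smul_mem' := by
    intro t v hv
    simp only [Set.mem_setOf_eq] at *
    refine ⟨fun x => ?_, fun i => ?_, fun i => ?_⟩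
    · rw [lie_smul, hv.1 x, smul_comm]
    · rw [lie_smul, hv.2.1 i, smul_comm]
    · rw [lie_smul, hv.2.2 i, smul_comm]

/-- An integrable module: a weight module for `H = 𝕙 ⊕ span{K i} ⊕ span{d i}` with
finite-dimensional weight spaces on which all the operators `x_α ⊗ t^k` act locally
nilpotently. -/
def IsIntegrable (td : TriangularData 𝕘) : Prop :=
  (⨆ η : Module.Dual ℂ td.H, ⨆ c : Fin (n + 1) → ℂ, ⨆ m : Fin (n + 1) → ℂ,
      A.hWeightSp V td η c m) = ⊤ ∧
  (∀ (η : Module.Dual ℂ td.H) (c m : Fin (n + 1) → ℂ),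
      FiniteDimensional ℂ (A.hWeightSp V td η c m)) ∧
  ∀ α ∈ td.roots, ∀ x ∈ rootSpaceOf td.H α, ∀ (k : Fin (n + 1) → ℤ) (v : V),
    ∃ m : ℕ, ((LieModule.toEnd ℂ E V (A.emb k x)) ^ m) v = 0

/-- A weakly integrable module: an `H`-weight module with finite-dimensional weight
spaces on which the root vectors of `𝕘` act locally nilpotently. -/
def IsWeaklyIntegrable (td : TriangularData 𝕘) : Prop :=
  (⨆ η : Module.Dual ℂ td.H, ⨆ c : Fin (n + 1) → ℂ, ⨆ m : Fin (n + 1) → ℂ,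
      A.hWeightSp V td η c m) = ⊤ ∧
  (∀ (η : Module.Dual ℂ td.H) (c m : Fin (n + 1) → ℂ),
      FiniteDimensional ℂ (A.hWeightSp V td η c m)) ∧
  ∀ v : V, ∀ α ∈ td.roots, ∃ m : ℕ, ∀ x ∈ rootSpaceOf td.H α,
    ((LieModule.toEnd ℂ E V (A.emb 0 x)) ^ m) v = 0

/-- `V` has level zero: each central element `K i` acts trivially. -/
def IsLevelZero : Prop := ∀ i, ∀ v : V, ⁅A.K i, v⁆ = 0

/-- The core acts non-trivially on `V`. -/
def CoreActsNontrivially : Prop := ∃ e ∈ A.core, ∃ v : V, ⁅e, v⁆ ≠ 0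

/-- A vector `v` is a restricted generalized highest weight (GHW) vector: it is
non-zero and annihilated by all homogeneous components `((E_{n+1})_c)_k` of the core
with `k ≥ (N, …, N)` for some `N ∈ ℕ`. -/
def IsRestrictedGHWVector (v : V) : Prop :=
  v ≠ 0 ∧ ∃ N : ℕ, ∀ k : Fin (n + 1) → ℤ, (∀ i, (N : ℤ) ≤ k i) →
    ∀ e ∈ A.coreGrade k, ⁅e, v⁆ = 0

/-- A restricted generalized highest weight (GHW) module with GHW vector of
`D`-weight `Λ₀`. -/
def IsRestrictedGHWModule (Λ₀ : Fin (n + 1) → ℂ) : Prop :=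
  ∃ v₀ : V, v₀ ∈ A.dWeight V Λ₀ ∧ A.IsRestrictedGHWVector V v₀

/-- The "highest weight space" `V(+) = {v ∈ V | (n⁺ ⊗ A_{n+1}) v = 0}`. -/
def VplusN (td : TriangularData 𝕘) : Submodule ℂ V where
  carrier := {v | ∀ (k : Fin (n + 1) → ℤ), ∀ x ∈ td.nPlus, ⁅A.emb k x, v⁆ = 0}
  add_mem' := by
    intro a b ha hb
    simp only [Set.mem_setOf_eq] at *
    intro k x hx
    rw [lie_add, ha k x hx, hb k x hx, add_zero]
  zero_mem' := by
    simp only [Set.mem_setOf_eq]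
    intro k x hx; simp
  smul_mem' := by
    intro c v hv
    simp only [Set.mem_setOf_eq] at *
    intro k x hx
    rw [lie_smul, hv k x hx, smul_zero]

end EALARealization

/-- `W` is an irreducible module over the subalgebra `S` of `E` (`W` is a non-zero
`S`-invariant subspace with no proper non-zero `S`-invariant subspaces). -/
def IsIrreducibleOver {E : Type v} {V : Type w} [LieRing E] [LieAlgebra ℂ E]
    [AddCommGroup V] [Module ℂ V] [LieRingModule E V] [LieModule ℂ E V]
    (S : Submodule ℂ E) (W : Submodule ℂ V) : Prop :=
  W ≠ ⊥ ∧ (∀ s ∈ S, ∀ w ∈ W, ⁅s, w⁆ ∈ W) ∧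
    ∀ U : Submodule ℂ V, U ≤ W → (∀ s ∈ S, ∀ u ∈ U, ⁅s, u⁆ ∈ U) → U = ⊥ ∨ U = W

/-- An irreducible (Lie) module: non-zero, with no proper non-zero invariant subspaces. -/
def IsIrreducibleLieModule (E : Type v) (V : Type w) [LieRing E] [LieAlgebra ℂ E]
    [AddCommGroup V] [Module ℂ V] [LieRingModule E V] [LieModule ℂ E V] : Prop :=
  (∃ v : V, v ≠ 0) ∧
    ∀ U : Submodule ℂ V, (∀ (e : E), ∀ v ∈ U, ⁅e, v⁆ ∈ U) → U = ⊥ ∨ U = ⊤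



namespace NZLevel

open Module

/-- A cone of "positive" elements all of whose intervals are finite makes the group cyclic. -/
theorem cyclic_of_cone {G : Type*} [AddCommGroup G] (S : Set G)
    (h0 : (0 : G) ∉ S) (htot : ∀ s, s ≠ 0 → s ∈ S ∨ -s ∈ S)
    (hadd : ∀ s t, s ∈ S → t ∈ S → s + t ∈ S)
    (hfin : ∀ k ∈ S, {p | p ∈ S ∧ k - p ∈ S}.Finite) :
    ∃ e : G, ∀ g : G, g ∈ AddSubgroup.zmultiples e := by
  classical
  by_cases hS : S.Nonempty
  swap
  · refine ⟨0, fun g => ?_⟩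
    by_cases hg : g = 0
    · rw [hg]; exact zero_mem _
    · rcases htot g hg with h | h
      · exact absurd ⟨_, h⟩ hS
      · exact absurd ⟨_, h⟩ hS
  let I : G → Set G := fun k => {p | p ∈ S ∧ k - p ∈ S}
  have hlt : ∀ k ∈ S, ∀ p ∈ I k, (I p).ncard < (I k).ncard := by
    intro k hk p hp
    apply Set.ncard_lt_ncard _ (hfin k hk)
    refine ⟨fun q hq => ⟨hq.1, ?_⟩, fun h => ?_⟩
    · have := hadd _ _ hp.2 hq.2
      rwa [show k - p + (p - q) = k - q by abel] at this
    · have := (h hp).2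
      rw [sub_self] at this
      exact h0 this
  obtain ⟨e, heS, hemin⟩ : ∃ e ∈ S, ∀ k ∈ S, (I e).ncard ≤ (I k).ncard := by
    obtain ⟨e, he, h⟩ := (measure fun k => (I k).ncard).wf.has_min S hS
    exact ⟨e, he, fun k hk => not_lt.1 (h k hk)⟩
  have hS' : ∀ m : ℕ, ∀ s ∈ S, (I s).ncard = m → s ∈ AddSubgroup.zmultiples e := by
    intro m
    induction m using Nat.strong_induction_on with
    | _ m ih =>
      intro s hs hm
      by_cases hse : s - e = 0
      · rw [sub_eq_zero.1 hse]; exact AddSubgroup.mem_zmultiples e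
      rcases htot _ hse with h | h
      · have hmem : s - e ∈ I s := ⟨h, by simpa using heS⟩
        have h1 := ih _ (hm ▸ hlt s hs _ hmem) (s - e) h rfl
        have := add_mem h1 (AddSubgroup.mem_zmultiples e)
        simpa using this
      · have hmem : s ∈ I e := ⟨hs, by simpa using h⟩
        exact absurd (hlt e heS s hmem) (not_lt.2 (hemin s hs))
  refine ⟨e, fun g => ?_⟩
  by_cases hg : g = 0
  · rw [hg]; exact zero_mem _
  · rcases htot g hg with h | h
    · exact hS' _ g h rfl
    · have := neg_mem (hS' _ _ h rfl)
      simpa using this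

section deg

variable {V : Type*} [AddCommGroup V] [Module ℂ V]

/-- `z` shifts the eigenvalues of `d` by `r`. -/
def Deg (d : End ℂ V) (r : ℂ) (z : End ℂ V) : Prop := ∀ v, d (z v) = z (d v) + r • z v

theorem Deg.mul {d : End ℂ V} {r s : ℂ} {z w : End ℂ V} (hz : Deg d r z) (hw : Deg d s w) :
    Deg d (r + s) (z * w) := by
  intro v
  simp only [Module.End.mul_apply]
  rw [hz, hw, map_add, map_smul, add_smul]; abel

theorem Deg.sub {d : End ℂ V} {r : ℂ} {z w : End ℂ V} (hz : Deg d r z) (hw : Deg d r w) :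
    Deg d r (z - w) := by
  intro v
  simp only [LinearMap.sub_apply, map_sub]
  rw [hz, hw, smul_sub]; abel

theorem Deg.pow {d : End ℂ V} {r : ℂ} {z : End ℂ V} (hz : Deg d r z) (n : ℕ) :
    Deg d (n * r) (z ^ n) := by
  induction n with
  | zero => intro v; simp
  | succ n ih =>
    rw [pow_succ]
    have := ih.mul hz
    convert this using 1
    push_cast; ring

theorem Deg.mapsTo {d : End ℂ V} {r : ℂ} {z : End ℂ V} (hz : Deg d r z) (l : ℂ) :
    ∀ v ∈ d.eigenspace l, z v ∈ d.eigenspace (l + r) := by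
  intro v hv
  rw [Module.End.mem_eigenspace_iff] at *
  rw [hz, hv, map_smul, add_smul]

theorem Deg.finrank_le {d : End ℂ V} {r : ℂ} {z : End ℂ V} (hz : Deg d r z)
    (fd : ∀ l, FiniteDimensional ℂ (d.eigenspace l)) (hinj : Function.Injective z) (l : ℂ) :
    finrank ℂ (d.eigenspace l) ≤ finrank ℂ (d.eigenspace (l + r)) := by
  have := fd (l + r)
  apply LinearMap.finrank_le_finrank_of_injective (f := z.restrict (hz.mapsTo l))
  intro x y hxy
  apply Subtype.ext
  apply hinj
  exact congrArg Subtype.val hxy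

theorem no_comm {W : Type*} [AddCommGroup W] [Module ℂ W] [FiniteDimensional ℂ W] [Nontrivial W]
    (X Y : End ℂ W) (t : ℂ) (ht : t ≠ 0) (h : X * Y - Y * X = t • (1 : End ℂ W)) : False := by
  have := congrArg (LinearMap.trace ℂ W) h
  rw [map_sub, LinearMap.trace_mul_comm, sub_self, map_smul, LinearMap.trace_one] at this
  have h2 : (finrank ℂ W : ℂ) ≠ 0 := by
    exact_mod_cast (finrank_pos (R := ℂ) (M := W)).ne'
  rw [smul_eq_mul] at this
  exact mul_ne_zero ht h2 this.symm

/-- Trace argument. -/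
theorem trace_arg (d z a a' : End ℂ V) (r t : ℂ) (ht : t ≠ 0)
    (fd : ∀ l, FiniteDimensional ℂ (d.eigenspace l))
    (hz : Deg d r z) (ha : Deg d r a) (ha' : Deg d (-r) a')
    (hinj : Function.Injective z) (hza : ∀ v, z (a v) = a (z v)) (hza' : ∀ v, z (a' v) = a' (z v))
    (hcomm : ∀ v, a (a' v) - a' (a v) = t • v) (l : ℂ) (hl : d.eigenspace l ≠ ⊥)
    (hle : finrank ℂ (d.eigenspace (l + r)) ≤ finrank ℂ (d.eigenspace l)) : False := by
  have i1 := fd l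
  have i2 := fd (l + r)
  have heq := le_antisymm (hz.finrank_le fd hinj l) hle
  have hinj' : Function.Injective (z.restrict (hz.mapsTo l)) := by
    intro x y hxy
    exact Subtype.ext (hinj (congrArg Subtype.val hxy))
  let Z : d.eigenspace l ≃ₗ[ℂ] d.eigenspace (l + r) :=
    LinearEquiv.ofBijective (z.restrict (hz.mapsTo l))
      ⟨hinj', (LinearMap.injective_iff_surjective_of_finrank_eq_finrank heq).1 hinj'⟩
  have hZ : ∀ x, (Z x : V) = z x := fun x => rfl
  have hm' : ∀ v ∈ d.eigenspace (l + r), a' v ∈ d.eigenspace l := by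
    intro v hv
    have := ha'.mapsTo (l + r) v hv
    rwa [add_neg_cancel_right] at this
  let A : d.eigenspace l →ₗ[ℂ] d.eigenspace (l + r) := a.restrict (ha.mapsTo l)
  let A' : d.eigenspace (l + r) →ₗ[ℂ] d.eigenspace l := a'.restrict hm'
  have : Nontrivial (d.eigenspace l) := Submodule.nontrivial_iff_ne_bot.2 hl
  refine no_comm (W := d.eigenspace l) (Z.symm.toLinearMap ∘ₗ A) (A' ∘ₗ Z.toLinearMap) t ht ?_
  ext x
  have key : Z (Z.symm (A (A' (Z x)))) = Z (A' (A x) + t • x) := by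
    rw [LinearEquiv.apply_symm_apply]
    apply Subtype.ext
    rw [hZ]
    show a (a' (z x)) = z (a' (a x) + t • (x : V))
    rw [← hza', ← hza, ← hcomm (x : V)]
    congr 1; abel
  have key2 := Z.injective key
  show ((Z.symm (A (A' (Z x))) - A' (Z (Z.symm (A x))) : d.eigenspace l) : V) = _
  rw [key2, LinearEquiv.apply_symm_apply]
  simp

end deg

/-- Heisenberg-like system. -/
structure HSys {G : Type*} [AddCommGroup G] (φ : G →+ ℂ) (b : ℂ) (V : Type*) [AddCommGroup V]
    [Module ℂ V] (d : End ℂ V) (a : G → End ℂ V) : Prop where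
  da : ∀ s, Deg d (φ s) (a s)
  aa : ∀ s v, a s (a (-s) v) - a (-s) (a s v) = (b * φ s) • v
  z : ∀ s t r v, a r (a s (a t v) - a t (a s v)) = a s (a t (a r v)) - a t (a s (a r v))
  fd : ∀ l, FiniteDimensional ℂ (d.eigenspace l)

/-- Invariant subspaces. -/
def Inv {G V : Type*} [AddCommGroup V] [Module ℂ V] (d : End ℂ V) (a : G → End ℂ V)
    (N : Submodule ℂ V) : Prop := (∀ v ∈ N, d v ∈ N) ∧ ∀ s, ∀ v ∈ N, a s v ∈ N

section irr

variable {G : Type*} [AddCommGroup G] {φ : G →+ ℂ} {b : ℂ} {V : Type*} [AddCommGroup V]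
    [Module ℂ V] {d : End ℂ V} {a : G → End ℂ V}

theorem HSys.comm (H : HSys φ b V d a) (hφ : Function.Injective φ) (hb : b ≠ 0)
    (hirr : ∀ N, Inv d a N → N = ⊥ ∨ N = ⊤) (l : ℂ) (hl : d.eigenspace l ≠ ⊥)
    (s t : G) (hst : s + t ≠ 0) (v : V) : a s (a t v) = a t (a s v) := by
  have hr : φ (s + t) ≠ 0 := fun h => hst (hφ (by rw [h, map_zero]))
  obtain ⟨z, hz⟩ : ∃ z : End ℂ V, z = a s * a t - a t * a s := ⟨_, rfl⟩
  have hzv : ∀ v, z v = a s (a t v) - a t (a s v) := fun v => by rw [hz]; rfl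
  have hdz : Deg d (φ (s + t)) z := by
    rw [hz]
    have h1 := (H.da s).mul (H.da t)
    have h2 := (H.da t).mul (H.da s)
    rw [add_comm] at h2
    rw [map_add]
    exact h1.sub h2
  have hza : ∀ r v, z (a r v) = a r (z v) := fun r v => by rw [hzv, hzv, H.z]
  have hker : Inv d a (LinearMap.ker z) := by
    refine ⟨fun v hv => ?_, fun r v hv => ?_⟩
    · rw [LinearMap.mem_ker] at *
      have := hdz v
      rw [hv] at this
      simpa using this.symm
    · rw [LinearMap.mem_ker] at *
      rw [hza, hv, map_zero]
  have hran : Inv d a (LinearMap.range z) := by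
    refine ⟨?_, ?_⟩
    · rintro _ ⟨v, rfl⟩
      rw [hdz]
      exact add_mem ⟨_, rfl⟩ (Submodule.smul_mem _ _ ⟨_, rfl⟩)
    · rintro r _ ⟨v, rfl⟩
      rw [← hza]
      exact ⟨_, rfl⟩
  suffices hz0 : z = 0 by
    have := hzv v
    rw [hz0] at this
    exact (sub_eq_zero.1 this.symm)
  by_contra hz0
  have hk : LinearMap.ker z = ⊥ := by
    rcases hirr _ hker with h | h
    · exact h
    · exact absurd (LinearMap.ker_eq_top.1 h) hz0
  have hR : LinearMap.range z = ⊤ := by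
    rcases hirr _ hran with h | h
    · exact absurd (LinearMap.range_eq_bot.1 h) hz0
    · exact h
  have hinj := LinearMap.ker_eq_bot.1 hk
  have ha' : Deg d (-φ (s + t)) (a (-(s + t))) := by
    rw [← map_neg]; exact H.da _
  refine trace_arg d z (a (s + t)) (a (-(s + t))) _ (b * φ (s + t)) (mul_ne_zero hb hr) H.fd hdz
    (H.da _) ha' hinj (hza _) (hza _) (H.aa _) l hl ?_
  have i1 := H.fd l
  refine LinearMap.finrank_le_finrank_of_surjective (f := z.restrict (hdz.mapsTo l)) ?_
  rintro ⟨y, hy⟩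
  obtain ⟨w, rfl⟩ := LinearMap.range_eq_top.1 hR y
  refine ⟨⟨w, ?_⟩, rfl⟩
  rw [Module.End.mem_eigenspace_iff] at *
  apply hinj
  rw [hdz, add_smul] at hy
  rw [map_smul]
  exact add_right_cancel hy

theorem HSys.pow_aa (H : HSys φ b V d a) (s : G) (n : ℕ) (v : V) :
    (a s ^ (n + 1)) (a (-s) v) = a (-s) ((a s ^ (n + 1)) v)
      + ((n + 1 : ℂ) * (b * φ s)) • (a s ^ n) v := by
  induction n generalizing v with
  | zero =>
    have := H.aa s v
    simp only [zero_add, pow_one, pow_zero, Module.End.one_apply, Nat.cast_zero, one_mul]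
    rw [← this]; abel
  | succ n ih =>
    have h1 := H.aa s v
    have h2 : a s (a (-s) v) = a (-s) (a s v) + (b * φ s) • v := by rw [← h1]; abel
    have e1 : ∀ m : ℕ, ∀ w, (a s ^ (m + 1)) w = (a s ^ m) (a s w) := fun m w => by
      rw [pow_succ]; rfl
    rw [e1 (n + 1) (a (-s) v), h2, map_add, ih, map_smul, ← e1, ← e1, add_assoc, ← add_smul]
    congr 2
    push_cast; ring

theorem pow_comm_of {f g : End ℂ V} (h : ∀ v, f (g v) = g (f v)) (n : ℕ) (v : V) :
    (f ^ n) (g v) = g ((f ^ n) v) := by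
  have : Commute f g := LinearMap.ext h
  exact LinearMap.congr_fun (this.pow_left n) v

theorem HSys.inj_or_nil (H : HSys φ b V d a)
    (hirr : ∀ N, Inv d a N → N = ⊥ ∨ N = ⊤)
    (hcomm : ∀ s t, s + t ≠ 0 → ∀ v, a s (a t v) = a t (a s v)) (s : G) :
    Function.Injective (a s) ∨ ∀ v, ∃ n : ℕ, (a s ^ n) v = 0 := by
  have hmem : ∀ v, v ∈ (a s).maxGenEigenspace 0 ↔ ∃ n : ℕ, (a s ^ n) v = 0 := by
    intro v
    rw [Module.End.mem_maxGenEigenspace]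
    simp
  have hinv : Inv d a ((a s).maxGenEigenspace 0) := by
    refine ⟨fun v hv => ?_, fun t v hv => ?_⟩
    · rw [hmem] at *
      obtain ⟨n, hn⟩ := hv
      refine ⟨n, ?_⟩
      have := (H.da s).pow n v
      rw [hn] at this
      simpa using this.symm
    · rw [hmem] at *
      obtain ⟨n, hn⟩ := hv
      by_cases hst : s + t = 0
      · obtain rfl : t = -s := (neg_eq_of_add_eq_zero_right hst).symm
        refine ⟨n + 1, ?_⟩
        rw [H.pow_aa, hn, pow_succ', Module.End.mul_apply, hn]
        simp
      · refine ⟨n, ?_⟩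
        rw [pow_comm_of (hcomm s t hst), hn, map_zero]
  rcases hirr _ hinv with h | h
  · left
    rw [← LinearMap.ker_eq_bot, eq_bot_iff, ← h]
    intro v hv
    rw [hmem]
    exact ⟨1, by simpa using hv⟩
  · right
    intro v
    rw [← hmem, h]; trivial

theorem HSys.inj_total (H : HSys φ b V d a) (hφ : Function.Injective φ) (hb : b ≠ 0)
    [Nontrivial V]
    (hnil : ∀ s, Function.Injective (a s) ∨ ∀ v, ∃ n : ℕ, (a s ^ n) v = 0) (s : G) (hs : s ≠ 0) :
    Function.Injective (a s) ∨ Function.Injective (a (-s)) := by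
  classical
  by_contra! hcon
  have h1 := (hnil s).resolve_left hcon.1
  have h2 := (hnil (-s)).resolve_left hcon.2
  have hr : φ s ≠ 0 := fun h => hs (hφ (by rw [h, map_zero]))
  obtain ⟨v0, hv0⟩ := exists_ne (0 : V)
  -- a nonzero vector killed by `a (-s)`
  obtain ⟨w, hw0, hw⟩ : ∃ w, w ≠ 0 ∧ a (-s) w = 0 := by
    by_contra! hc
    apply hcon.2
    rw [injective_iff_map_eq_zero]
    intro w hw
    by_contra hw0
    exact hc w hw0 hw
  have hne : ∀ n : ℕ, (a s ^ n) w ≠ 0 := by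
    intro n
    induction n with
    | zero => simpa using hw0
    | succ n ih =>
      intro h
      have := H.pow_aa s n w
      rw [hw, h, map_zero, map_zero, zero_add] at this
      have hn : ((n : ℂ) + 1) ≠ 0 := by exact_mod_cast Nat.succ_ne_zero n
      rcases smul_eq_zero.1 this.symm with h' | h'
      · exact mul_ne_zero hn (mul_ne_zero hb hr) h'
      · exact ih h'
  obtain ⟨n, hn⟩ := h1 w
  exact hne n hn

theorem HSys.vacuum (H : HSys φ b V d a)
    (hcomm : ∀ s t, s + t ≠ 0 → ∀ v, a s (a t v) = a t (a s v))
    (l : ℂ) (hl : d.eigenspace l ≠ ⊥) (k : ℂ) (F : Finset G)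
    (hF : ∀ p ∈ F, ∀ q ∈ F, p + q ≠ 0)
    (hinj : ∀ p ∈ F, Function.Injective (a p))
    (hnil : ∀ p ∈ F, ∀ v, ∃ n : ℕ, (a (-p) ^ n) v = 0) :
    ∃ l' : ℂ, ∃ v ∈ d.eigenspace l', v ≠ 0 ∧ (∀ p ∈ F, a (-p) v = 0) ∧
      finrank ℂ (d.eigenspace (l' + k)) ≤ finrank ℂ (d.eigenspace (l + k)) := by
  classical
  induction F using Finset.induction_on with
  | empty =>
    obtain ⟨v, hv, hv0⟩ := (Submodule.ne_bot_iff _).1 hl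
    exact ⟨l, v, hv, hv0, by simp, le_rfl⟩
  | insert p F hp ih =>
    obtain ⟨l', v, hv, hv0, hkill, hle⟩ := ih
      (fun p hp q hq => hF p (Finset.mem_insert_of_mem hp) q (Finset.mem_insert_of_mem hq))
      (fun p hp => hinj p (Finset.mem_insert_of_mem hp))
      (fun p hp => hnil p (Finset.mem_insert_of_mem hp))
    have hex := hnil p (Finset.mem_insert_self _ _) v
    obtain ⟨m, hm⟩ : ∃ m, Nat.find hex = m + 1 := by
      apply Nat.exists_eq_succ_of_ne_zero
      intro h
      have := Nat.find_spec hex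
      rw [h] at this
      exact hv0 (by simpa using this)
    have hm1 : (a (-p) ^ (m + 1)) v = 0 := by
      have := Nat.find_spec hex
      rwa [hm] at this
    have hm0 : (a (-p) ^ m) v ≠ 0 := Nat.find_min hex (by omega)
    refine ⟨l' + m * φ (-p), (a (-p) ^ m) v, ((H.da (-p)).pow m).mapsTo l' v hv, hm0, ?_, ?_⟩
    · intro q hq
      rcases Finset.mem_insert.1 hq with rfl | hq'
      · rwa [pow_succ', Module.End.mul_apply] at hm1
      · have hpq : -p + -q ≠ 0 := by
          intro h
          apply hF p (Finset.mem_insert_self _ _) q hq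
          rw [← neg_add] at h
          exact neg_eq_zero.1 h
        rw [← pow_comm_of (hcomm (-p) (-q) hpq), hkill q hq', map_zero]
    · refine le_trans ?_ hle
      have hpi : Function.Injective (a p ^ m) := by
        rw [Module.End.coe_pow]
        exact (hinj p (Finset.mem_insert_self _ _)).iterate m
      have := ((H.da p).pow m).finrank_le H.fd hpi (l' + m * φ (-p) + k)
      rwa [show l' + m * φ (-p) + k + m * φ p = l' + k by rw [map_neg]; ring] at this

theorem HSys.card_le (H : HSys φ b V d a) (hφ : Function.Injective φ) (hb : b ≠ 0)
    (hcomm : ∀ s t, s + t ≠ 0 → ∀ v, a s (a t v) = a t (a s v))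
    (l : ℂ) (hl : d.eigenspace l ≠ ⊥) (k : G) (F : Finset G)
    (hF0 : ∀ p ∈ F, p ≠ 0)
    (hF : ∀ p ∈ F, ∀ q ∈ F, p + q ≠ 0)
    (hFk : ∀ p ∈ F, ∀ q ∈ F, p + q ≠ k)
    (hinj : ∀ p ∈ F, Function.Injective (a p))
    (hinj' : ∀ p ∈ F, Function.Injective (a (k - p)))
    (hnil : ∀ p ∈ F, ∀ v, ∃ n : ℕ, (a (-p) ^ n) v = 0) :
    F.card ≤ finrank ℂ (d.eigenspace (l + φ k)) := by
  classical
  obtain ⟨l', v, hv, hv0, hkill, hle⟩ := H.vacuum hcomm l hl (φ k) F hF hinj hnil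
  refine le_trans ?_ hle
  have hmem : ∀ p : G, a p (a (k - p) v) ∈ d.eigenspace (l' + φ k) := by
    intro p
    have h1 := (H.da p).mapsTo _ _ ((H.da (k - p)).mapsTo l' v hv)
    rwa [show l' + φ (k - p) + φ p = l' + φ k by rw [map_sub]; ring] at h1
  have hfd := H.fd (l' + φ k)
  have hli : LinearIndependent ℂ
      (fun p : F => (⟨a p (a (k - p) v), hmem p⟩ : d.eigenspace (l' + φ k))) := by
    apply LinearIndependent.of_comp (d.eigenspace (l' + φ k)).subtype
    rw [Fintype.linearIndependent_iff]
    intro g hg p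
    have hg' := congrArg (a (-(p : G))) hg
    rw [map_sum, map_zero, Finset.sum_eq_single p] at hg'
    · simp only [Function.comp_apply, Submodule.subtype_apply, map_smul] at hg'
      have h1 := H.aa (p : G) (a (k - p) v)
      have h2 : a (-(p : G)) (a (k - p) v) = 0 := by
        rw [hcomm, hkill p p.2, map_zero]
        intro h
        apply hFk p p.2 p p.2
        have : k - ((p : G) + p) = 0 := by rw [← h]; abel
        exact (sub_eq_zero.1 this).symm
      rw [h2, map_zero, zero_sub] at h1
      rw [neg_eq_iff_eq_neg.1 h1] at hg'
      have hp0 : φ p ≠ 0 := fun h => hF0 p p.2 (hφ (by rw [h, map_zero]))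
      have hne : a (k - p) v ≠ 0 := fun h => hv0 (hinj' p p.2 (by rw [h, map_zero]))
      rcases smul_eq_zero.1 hg' with h | h
      · exact h
      · rw [neg_eq_zero, smul_eq_zero] at h
        exact absurd h (not_or.2 ⟨mul_ne_zero hb hp0, hne⟩)
    · intro q _ hqp
      simp only [Function.comp_apply, Submodule.subtype_apply, map_smul]
      rw [hcomm (-(p : G)) q, hcomm (-(p : G)) (k - q), hkill p p.2, map_zero, map_zero, smul_zero]
      · intro h
        apply hFk p p.2 q q.2
        have : k - ((p : G) + q) = 0 := by rw [← h]; abel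
        exact (sub_eq_zero.1 this).symm
      · intro h
        apply hqp
        exact Subtype.ext (neg_add_eq_zero.1 h).symm
    · simp
  have := hli.fintype_card_le_finrank
  simpa using this

theorem HSys.cyclic (H : HSys φ b V d a) (hφ : Function.Injective φ) (hb : b ≠ 0)
    (hirr : ∀ N, Inv d a N → N = ⊥ ∨ N = ⊤) (l : ℂ) (hl : d.eigenspace l ≠ ⊥) :
    ∃ e : G, ∀ g : G, g ∈ AddSubgroup.zmultiples e := by
  classical
  have hcomm := H.comm hφ hb hirr l hl
  have hnil := H.inj_or_nil hirr hcomm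
  have hV : Nontrivial V := by
    obtain ⟨v, _, hv0⟩ := (Submodule.ne_bot_iff _).1 hl
    exact ⟨v, 0, hv0⟩
  have htot := H.inj_total hφ hb hnil
  have h2 : ∀ g : G, g + g = 0 → g = 0 := by
    intro g hg
    apply hφ
    have := congrArg φ hg
    rw [map_add, map_zero, ← two_mul] at this
    rw [map_zero]
    simpa using this
  -- zero-sum products
  have main : ∀ t r : G, t + r ≠ 0 → Function.Injective (a t) → Function.Injective (a r) →
      Function.Injective (a (-(t + r))) → (t + r) + t ≠ 0 → (t + r) + r ≠ 0 → t ≠ 0 → r ≠ 0 →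
      False := by
    intro t r htr hit hir hi h3 h4 ht hr
    have hd := (H.da t).mul (H.da r)
    rw [← map_add] at hd
    have hne : φ (t + r) ≠ 0 := fun h => htr (hφ (by rw [h, map_zero]))
    have ha' : Deg d (-φ (t + r)) (a (-(t + r))) := by
      rw [← map_neg]; exact H.da _
    refine trace_arg d (a t * a r) (a (t + r)) (a (-(t + r))) _ (b * φ (t + r))
      (mul_ne_zero hb hne) H.fd hd (H.da _) ha' (hit.comp hir) ?_ ?_ (H.aa _) l hl ?_
    · intro v
      simp only [Module.End.mul_apply]
      rw [hcomm r (t + r) (by rwa [add_comm]), hcomm t (t + r) (by rwa [add_comm])]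
    · intro v
      simp only [Module.End.mul_apply]
      rw [hcomm r (-(t + r)) (by simpa using ht), hcomm t (-(t + r)) (by simpa using hr)]
    · have := ha'.finrank_le H.fd hi (l + φ (t + r))
      rwa [add_neg_cancel_right] at this
  have hanti : ∀ s : G, s ≠ 0 → Function.Injective (a s) → Function.Injective (a (-s)) → False := by
    intro s hs hi hi'
    have hss : s + s ≠ 0 := fun h => hs (h2 s h)
    have hne : φ (s + s) ≠ 0 := fun h => hss (hφ (by rw [h, map_zero]))
    have h3 : s + s + s ≠ 0 := by
      intro h
      apply hs
      apply hφ
      have := congrArg φ h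
      rw [map_add, map_add, map_zero] at this
      rw [map_zero]
      linear_combination this / 3
    have hd := (H.da s).mul (H.da s)
    rw [← map_add] at hd
    have ha' : Deg d (-φ (s + s)) (a (-(s + s))) := by
      rw [← map_neg]; exact H.da _
    refine trace_arg d (a s * a s) (a (s + s)) (a (-(s + s))) _ (b * φ (s + s))
      (mul_ne_zero hb hne) H.fd hd (H.da _) ha' (hi.comp hi) ?_ ?_ (H.aa _) l hl ?_
    · intro v
      simp only [Module.End.mul_apply]
      rw [hcomm s (s + s) (by rwa [add_comm]), hcomm s (s + s) (by rwa [add_comm])]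
    · intro v
      simp only [Module.End.mul_apply]
      rw [hcomm s (-(s + s)) (by simpa using hs), hcomm s (-(s + s)) (by simpa using hs)]
    · have hd' := (H.da (-s)).mul (H.da (-s))
      have := hd'.finrank_le H.fd (hi'.comp hi') (l + φ (s + s))
      rwa [show l + φ (s + s) + (φ (-s) + φ (-s)) = l by simp only [map_add, map_neg]; ring] at this
  let S : Set G := {s | s ≠ 0 ∧ Function.Injective (a s)}
  have hS0 : (0 : G) ∉ S := fun h => h.1 rfl
  have hStot : ∀ s, s ≠ 0 → s ∈ S ∨ -s ∈ S := by
    intro s hs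
    rcases htot s hs with h | h
    · exact Or.inl ⟨hs, h⟩
    · exact Or.inr ⟨neg_ne_zero.2 hs, h⟩
  have hSneg : ∀ s, s ∈ S → -s ∈ S → False := fun s h h' => hanti s h.1 h.2 h'.2
  have hSsum : ∀ s t, s ∈ S → t ∈ S → s + t ≠ 0 := by
    intro s t hs ht h
    rw [(neg_eq_of_add_eq_zero_right h).symm] at ht
    exact hSneg s hs ht
  have hSadd : ∀ s t, s ∈ S → t ∈ S → s + t ∈ S := by
    intro s t hs ht
    rcases hStot _ (hSsum s t hs ht) with h | h
    · exact h
    exfalso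
    by_cases c1 : (s + t) + s = 0
    · -- `t = -2 s`, use the pair `s, s`
      have ht' : t = -(s + s) := by
        rw [eq_neg_iff_add_eq_zero, ← c1]; abel
      have hss := hSsum s s hs hs
      refine main s s hss hs.2 hs.2 (ht' ▸ ht.2) ?_ ?_ hs.1 hs.1 <;>
      · intro h3
        apply hs.1
        apply hφ
        have := congrArg φ h3
        rw [map_add, map_add, map_zero] at this
        rw [map_zero]
        linear_combination this / 3
    by_cases c2 : (s + t) + t = 0
    · have hs' : s = -(t + t) := by
        rw [eq_neg_iff_add_eq_zero, ← c2]; abel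
      have htt := hSsum t t ht ht
      refine main t t htt ht.2 ht.2 (hs' ▸ hs.2) ?_ ?_ ht.1 ht.1 <;>
      · intro h3
        apply ht.1
        apply hφ
        have := congrArg φ h3
        rw [map_add, map_add, map_zero] at this
        rw [map_zero]
        linear_combination this / 3
    exact main s t (hSsum s t hs ht) hs.2 ht.2 h.2 c1 c2 hs.1 ht.1
  apply cyclic_of_cone S hS0 hStot hSadd
  intro k hk
  by_contra hinf
  let P : Set G := {p | p ∈ S ∧ k - p ∈ S ∧ k - p - p ∈ S}
  have hPinf : P.Infinite := by
    intro hP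
    apply hinf
    have hsub : {p | p + p = k}.Subsingleton := by
      intro p hp q hq
      have h : (p - q) + (p - q) = 0 := by
        rw [show (p - q) + (p - q) = (p + p) - (q + q) by abel, hp, hq, sub_self]
      exact sub_eq_zero.1 (h2 _ h)
    refine ((hP.union (hP.image (fun p => k - p))).union hsub.finite).subset ?_
    rintro p ⟨hp1, hp2⟩
    by_cases hpp : k - p - p = 0
    · right
      show p + p = k
      rw [sub_sub, sub_eq_zero] at hpp
      exact hpp.symm
    left
    rcases hStot _ hpp with h | h
    · exact Or.inl ⟨hp1, hp2, h⟩
    · refine Or.inr ⟨k - p, ⟨hp2, ?_, ?_⟩, ?_⟩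
      · simpa using hp1
      · convert h using 1; abel
      · simp
  obtain ⟨F, hFP, hFc⟩ := hPinf.exists_subset_card_eq (finrank ℂ (d.eigenspace (l + φ k)) + 1)
  have := H.card_le hφ hb hcomm l hl k F (fun p hp => (hFP hp).1.1)
    (fun p hp q hq => hSsum p q (hFP hp).1 (hFP hq).1)
    (fun p hp q hq h => by
      apply hSsum _ _ (hFP hp).2.2 (hFP hq).2.2
      rw [show k - p - p + (k - q - q) = (k - (p + q)) + (k - (p + q)) by abel, h, sub_self,
        add_zero])
    (fun p hp => (hFP hp).1.2) (fun p hp => (hFP hp).2.1.2)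
    (fun p hp => (hnil (-p)).resolve_left fun h =>
      hSneg p (hFP hp).1 ⟨neg_ne_zero.2 (hFP hp).1.1, h⟩)
  omega

end irr

section reduction

variable {G : Type*} [AddCommGroup G] {φ : G →+ ℂ} {b : ℂ} {V : Type*} [AddCommGroup V]
    [Module ℂ V] {d : End ℂ V} {a : G → End ℂ V}

theorem eigenspace_eq_of_le (f : End ℂ V) (W : ℂ → Submodule ℂ V)
    (hW : ∀ l, W l ≤ f.eigenspace l) (htop : ⨆ l, W l = ⊤) (l : ℂ) : f.eigenspace l = W l := by
  refine le_antisymm ?_ (hW l)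
  have hind := (Module.End.eigenspaces_iSupIndep f) l
  intro v hv
  have hv' : v ∈ W l ⊔ ⨆ j, ⨆ (_ : j ≠ l), W j := by
    have : (⨆ l, W l) ≤ W l ⊔ ⨆ j, ⨆ (_ : j ≠ l), W j := by
      refine iSup_le fun j => ?_
      by_cases hj : j = l
      · rw [hj]; exact le_sup_left
      · exact le_sup_of_le_right (le_iSup₂_of_le j hj le_rfl)
    rw [htop] at this
    exact this trivial
  obtain ⟨w, hw, u, hu, rfl⟩ := Submodule.mem_sup.1 hv'
  have hu1 : u ∈ f.eigenspace l := by
    have := sub_mem hv (hW l hw)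
    simpa using this
  have hu2 : u ∈ ⨆ j, ⨆ (_ : j ≠ l), f.eigenspace j :=
    (iSup₂_mono fun j _ => hW j) hu
  have hu0 : u = 0 := (Submodule.disjoint_def.1 hind) u hu1 hu2
  rwa [hu0, add_zero]

theorem HSys.cyclic' (H : HSys φ b V d a) (hφ : Function.Injective φ) (hb : b ≠ 0)
    (htop : ⨆ l, d.eigenspace l = ⊤) [Nontrivial V] :
    ∃ e : G, ∀ g : G, g ∈ AddSubgroup.zmultiples e := by
  obtain ⟨l, hl⟩ : ∃ l, d.eigenspace l ≠ ⊥ := by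
    by_contra! h
    have h2 : (⨆ l, d.eigenspace l) = ⊥ := by simp [h]
    rw [htop] at h2
    exact top_ne_bot h2
  obtain ⟨v0, hv0l, hv0⟩ := (Submodule.ne_bot_iff _).1 hl
  obtain ⟨N, -, hN⟩ := zorn_le_nonempty₀ {N : Submodule ℂ V | Inv d a N ∧ v0 ∉ N} (by
    intro c hc hchain y hy
    have hdir : DirectedOn (· ≤ ·) c := hchain.directedOn
    refine ⟨sSup c, ⟨⟨?_, ?_⟩, ?_⟩, fun z hz => le_sSup hz⟩
    · intro v hv
      rw [Submodule.mem_sSup_of_directed ⟨y, hy⟩ hdir] at *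
      obtain ⟨x, hx, hvx⟩ := hv
      exact ⟨x, hx, (hc hx).1.1 v hvx⟩
    · intro s v hv
      rw [Submodule.mem_sSup_of_directed ⟨y, hy⟩ hdir] at *
      obtain ⟨x, hx, hvx⟩ := hv
      exact ⟨x, hx, (hc hx).1.2 s v hvx⟩
    · intro hv
      rw [Submodule.mem_sSup_of_directed ⟨y, hy⟩ hdir] at hv
      obtain ⟨x, hx, hvx⟩ := hv
      exact (hc hx).2 hvx) ⊥ ⟨⟨by simp, by simp⟩, by simpa using hv0⟩
  have hNinv : Inv d a N := hN.prop.1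
  have hNv : v0 ∉ N := hN.prop.2
  let dq : End ℂ (V ⧸ N) := N.mapQ N d hNinv.1
  let aq : G → End ℂ (V ⧸ N) := fun s => N.mapQ N (a s) (hNinv.2 s)
  have hdq : ∀ v, dq (N.mkQ v) = N.mkQ (d v) := fun v => rfl
  have haq : ∀ s v, aq s (N.mkQ v) = N.mkQ (a s v) := fun s v => rfl
  have hsurj : Function.Surjective N.mkQ := N.mkQ_surjective
  have HQ : HSys φ b (V ⧸ N) dq aq := by
    refine ⟨?_, ?_, ?_, ?_⟩
    · intro s v
      obtain ⟨v, rfl⟩ := hsurj v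
      rw [haq, hdq, hdq, haq, H.da, map_add, map_smul]
    · intro s v
      obtain ⟨v, rfl⟩ := hsurj v
      simp only [haq]
      rw [← map_sub, H.aa, map_smul]
    · intro s t r v
      obtain ⟨v, rfl⟩ := hsurj v
      simp only [haq, ← map_sub]
      rw [H.z, map_sub]
    · intro m
      have := H.fd m
      have he := eigenspace_eq_of_le dq (fun j => (d.eigenspace j).map N.mkQ) (by
        rintro j _ ⟨v, hv, rfl⟩
        rw [Module.End.mem_eigenspace_iff, hdq]
        rw [SetLike.mem_coe, Module.End.mem_eigenspace_iff] at hv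
        rw [hv, map_smul]) (by
        rw [← Submodule.map_iSup, htop, Submodule.map_top, Submodule.range_mkQ]) m
      rw [he]
      infer_instance
  have hmin : ∀ W, Inv dq aq W → W ≠ ⊥ → N.mkQ v0 ∈ W := by
    intro W hW hW0
    by_contra hc
    apply hW0
    have hcom : W.comap N.mkQ ∈ {N : Submodule ℂ V | Inv d a N ∧ v0 ∉ N} := by
      refine ⟨⟨fun v hv => ?_, fun s v hv => ?_⟩, hc⟩
      · exact hW.1 _ hv
      · exact hW.2 s _ hv
    have hle : N ≤ W.comap N.mkQ := by
      intro v hv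
      rw [Submodule.mem_comap, Submodule.mkQ_apply, (Submodule.Quotient.mk_eq_zero N).2 hv]
      exact zero_mem _
    have hge := hN.le_of_ge hcom hle
    rw [eq_bot_iff]
    intro w hw
    obtain ⟨v, rfl⟩ := hsurj w
    have : v ∈ N := hge hw
    simpa using this
  let M : Submodule ℂ (V ⧸ N) := sInf {W | Inv dq aq W ∧ W ≠ ⊥}
  have hMd : ∀ v ∈ M, dq v ∈ M := by
    intro v hv
    rw [Submodule.mem_sInf] at *
    exact fun W hW => hW.1.1 v (hv W hW)
  have hMa : ∀ s, ∀ v ∈ M, aq s v ∈ M := by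
    intro s v hv
    rw [Submodule.mem_sInf] at *
    exact fun W hW => hW.1.2 s v (hv W hW)
  have hvM : N.mkQ v0 ∈ M := by
    rw [Submodule.mem_sInf]
    exact fun W hW => hmin W hW.1 hW.2
  let dm : End ℂ M := dq.restrict hMd
  let am : G → End ℂ M := fun s => (aq s).restrict (hMa s)
  have HM : HSys φ b M dm am := by
    refine ⟨fun s v => Subtype.ext (HQ.da s v), fun s v => Subtype.ext (HQ.aa s v),
      fun s t r v => Subtype.ext (HQ.z s t r v), fun m => ?_⟩
    have := HQ.fd m
    have hmaps : ∀ v ∈ dm.eigenspace m, M.subtype v ∈ dq.eigenspace m := by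
      intro v hv
      rw [Module.End.mem_eigenspace_iff] at *
      exact congrArg Subtype.val hv
    refine FiniteDimensional.of_injective (V₂ := dq.eigenspace m) (M.subtype.restrict hmaps) ?_
    intro x y hxy
    have h3 : ((x : M) : V ⧸ N) = ((y : M) : V ⧸ N) :=
      congrArg (fun w : dq.eigenspace m => (w : V ⧸ N)) hxy
    exact Subtype.ext (Subtype.ext h3)
  have hv1 : N.mkQ v0 ≠ 0 := by
    intro h
    exact hNv (by simpa using h)
  refine HM.cyclic hφ hb ?_ l ?_
  · intro W hW
    by_cases hW0 : W = ⊥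
    · exact Or.inl hW0
    right
    have hinv : Inv dq aq (W.map M.subtype) := by
      refine ⟨?_, ?_⟩
      · rintro _ ⟨w, hw, rfl⟩
        exact ⟨dm w, hW.1 w hw, rfl⟩
      · rintro s _ ⟨w, hw, rfl⟩
        exact ⟨am s w, hW.2 s w hw, rfl⟩
    have hne : W.map M.subtype ≠ ⊥ := by
      intro h
      apply hW0
      rw [eq_bot_iff]
      intro w hw
      have h3 : M.subtype w ∈ W.map M.subtype := ⟨w, hw, rfl⟩
      rw [h, Submodule.mem_bot] at h3
      rw [Submodule.mem_bot]
      exact Subtype.ext h3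
    have hle : M ≤ W.map M.subtype := sInf_le ⟨hinv, hne⟩
    rw [eq_top_iff]
    rintro ⟨x, hx⟩ -
    obtain ⟨w, hw, hwx⟩ := hle hx
    have : w = ⟨x, hx⟩ := Subtype.ext hwx
    rwa [← this]
  · rw [Submodule.ne_bot_iff]
    refine ⟨⟨_, hvM⟩, ?_, fun h => hv1 (congrArg Subtype.val h)⟩
    rw [Module.End.mem_eigenspace_iff] at *
    apply Subtype.ext
    show dq (N.mkQ v0) = l • N.mkQ v0
    rw [hdq, hv0l, map_smul]

end reduction

/-- A nonzero functional on `ℤ^(n+1)` with cyclic range is normalized by a unimodular matrix. -/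
theorem exists_matrix {n : ℕ} (φ : (Fin (n + 1) → ℤ) →ₗ[ℤ] ℂ) (y : Fin (n + 1) → ℤ)
    (hy : φ y ≠ 0) (hcyc : ∀ k, ∃ m : ℤ, φ k = m • φ y) :
    ∃ P : Matrix (Fin (n + 1)) (Fin (n + 1)) ℤ, IsUnit P.det ∧
      φ (fun p => P p 0) ≠ 0 ∧ ∀ j, j ≠ 0 → φ (fun p => P p j) = 0 := by
  obtain ⟨m, ⟨B⟩⟩ : ∃ m, Nonempty (Basis (Fin m) ℤ (LinearMap.ker φ)) :=
    ⟨_, ⟨Module.finBasis ℤ (LinearMap.ker φ)⟩⟩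
  have hli : ∀ (c : ℤ), ∀ x ∈ LinearMap.ker φ, c • y + x = 0 → c = 0 := by
    intro c x hx h
    have := congrArg φ h
    rw [map_add, map_smul, LinearMap.mem_ker.1 hx, add_zero, map_zero] at this
    exact (smul_eq_zero.1 this).resolve_right hy
  have hsp : ∀ z : Fin (n + 1) → ℤ, ∃ c : ℤ, z + c • y ∈ LinearMap.ker φ := by
    intro z
    obtain ⟨m, hm⟩ := hcyc z
    refine ⟨-m, ?_⟩
    rw [LinearMap.mem_ker, map_add, map_smul, hm, neg_smul, add_neg_cancel]
  have hb : ⇑(Basis.mkFinCons y B hli hsp) = Fin.cons y ((↑) ∘ B) := Basis.coe_mkFinCons y B hli hsp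
  obtain ⟨b, hb'⟩ : ∃ b : Basis (Fin (m + 1)) ℤ (Fin (n + 1) → ℤ), b = Basis.mkFinCons y B hli hsp :=
    ⟨_, rfl⟩
  rw [← hb'] at hb
  have hmn : m = n := by
    have h1 := Module.finrank_eq_card_basis b
    simpa using h1.symm
  subst hmn
  refine ⟨(Pi.basisFun ℤ (Fin (m + 1))).toMatrix b, ?_, ?_, ?_⟩
  · exact Module.Basis.isUnit_det (Pi.basisFun ℤ (Fin (m + 1))) b
  · show φ (b 0) ≠ 0
    rw [hb]
    simpa using hy
  · intro j hj
    show φ (b j) = 0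
    obtain ⟨i, rfl⟩ := Fin.exists_succ_eq.2 hj
    rw [hb]
    simp

end NZLevel

/-! ### Statement 13 -/

/-- **Lemma 7.4.** If `V` is an irreducible quasi-finite module of non-zero level
over an untwisted fgc EALA `E_{n+1}`, then up to a twist by an automorphism coming
from the action of `GL(n+1, ℤ)`, one may assume that `K 0` acts by a non-zero scalar
while `K 1, …, K n` act by zero.  Concretely: if `K i` acts on `V` by the scalar
`c i` and some `c i ≠ 0`, then there is a matrix `P ∈ GL(n+1, ℤ)` such that the
transformed central character `j ↦ ∑ p, P p j • c p` (which is the tuple of scalars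
by which the twisted central elements `T_P (K j) = ∑ p, P p j • K p` act) is non-zero
at `j = 0` and zero at every `j ≠ 0`. -/
theorem nonzero_level_normalization
    {n : ℕ}
    {𝕘 : Type u} {E : Type v} [LieRing 𝕘] [LieAlgebra ℂ 𝕘]
    [FiniteDimensional ℂ 𝕘] [LieAlgebra.IsSimple ℂ 𝕘]
    [LieRing E] [LieAlgebra ℂ E]
    (A : EALARealization n 𝕘 E) (td : TriangularData 𝕘)
    (V : Type w) [AddCommGroup V] [Module ℂ V] [LieRingModule E V] [LieModule ℂ E V]
    (hirr : IsIrreducibleLieModule E V) (hqf : A.IsQuasiFinite V)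
    (c : Fin (n + 1) → ℂ) (hc : ∀ i, ∀ v : V, ⁅A.K i, v⁆ = c i • v)
    (hlvl : ∃ i, c i ≠ 0) :
    ∃ P : Matrix (Fin (n + 1)) (Fin (n + 1)) ℤ, IsUnit P.det ∧
      (∑ p, (P p 0 : ℂ) * c p ≠ 0) ∧
      ∀ j : Fin (n + 1), j ≠ 0 → (∑ p, (P p j : ℂ) * c p) = 0 := by
  classical
  -- the functional `k ↦ ∑ k i * c i`
  let φ : (Fin (n + 1) → ℤ) →ₗ[ℤ] ℂ := Fintype.linearCombination ℤ c
  have hφ : ∀ k : Fin (n + 1) → ℤ, φ k = ∑ i, (k i : ℂ) * c i := by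
    intro k
    simp [φ, Fintype.linearCombination_apply]
  -- the element `∑ k i K i` acts as `φ k`
  have hKact : ∀ (k : Fin (n + 1) → ℤ) (v : V), ⁅∑ i, ((k i : ℂ)) • A.K i, v⁆ = φ k • v := by
    intro k v
    rw [sum_lie, hφ, Finset.sum_smul]
    refine Finset.sum_congr rfl fun i _ => ?_
    rw [smul_lie, hc, smul_smul]
  obtain ⟨v1, hv1⟩ := hirr.1
  obtain ⟨i0, hi0⟩ := hlvl
  have hk0 : φ (Pi.single i0 1) ≠ 0 := by
    rw [hφ]
    rw [Finset.sum_eq_single i0]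
    · simpa using hi0
    · intro j _ hj; simp [hj]
    · simp
  -- the form is symmetric
  have hsymm : ∀ x y, A.B x y = A.B y x := by
    intro x y
    set k : Fin (n + 1) → ℤ := Pi.single i0 1
    have h1 := A.emb_bracket_opp k x y
    have h2 := A.emb_bracket_opp (-k) y x
    rw [neg_neg] at h2
    have h3 : (∑ i, (((-k) i : ℤ) : ℂ) • A.K i) = -∑ i, ((k i : ℂ)) • A.K i := by
      rw [← Finset.sum_neg_distrib]
      refine Finset.sum_congr rfl fun i _ => ?_
      simp
    rw [h3, ← lie_skew, h1, ← lie_skew x y, map_neg] at h2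
    have h4 : (A.B x y - A.B y x) • (∑ i, ((k i : ℂ)) • A.K i) = 0 := by
      rw [sub_smul, sub_eq_zero]
      rw [smul_neg, neg_add, ← sub_eq_add_neg, ← sub_eq_add_neg] at h2
      have h5 : -(-A.emb 0 ⁅y, x⁆) = A.emb 0 ⁅y, x⁆ := neg_neg _
      rw [h5] at h2
      exact sub_right_injective h2
    have h5 : (A.B x y - A.B y x) • (φ k • v1) = 0 := by
      rw [← hKact, ← smul_lie, h4, zero_lie]
    have h6 := (smul_eq_zero.1 h5).resolve_right (smul_ne_zero hk0 hv1)
    exact sub_eq_zero.1 h6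
  obtain ⟨x, hx⟩ : ∃ x, A.B x x ≠ 0 := by
    by_contra! h
    apply A.B_ne_zero
    ext y z
    have h1 := h (y + z)
    simp only [map_add, LinearMap.add_apply, h, hsymm z y, add_zero, zero_add] at h1
    have h2 : 2 * A.B y z = 0 := by rw [two_mul]; exact h1
    simpa using h2
  -- section of `φ`
  let Γ : Submodule ℤ ℂ := LinearMap.range φ
  obtain ⟨σ, hσ⟩ := Module.projective_lifting_property φ.rangeRestrict
    (LinearMap.id : Γ →ₗ[ℤ] Γ) φ.surjective_rangeRestrict
  have hσφ : ∀ s : Γ, φ (σ s) = s := by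
    intro s
    exact congrArg Subtype.val (LinearMap.congr_fun hσ s)
  let ι : Γ →+ ℂ := Γ.subtype.toAddMonoidHom
  have hι : ∀ s : Γ, ι s = (s : ℂ) := fun s => rfl
  have hιinj : Function.Injective ι := Subtype.val_injective
  -- operators on `V`
  let d0 : Module.End ℂ V := ∑ i, c i • LieModule.toEnd ℂ E V (A.d i)
  have hd0 : ∀ v, d0 v = ∑ i, c i • ⁅A.d i, v⁆ := by
    intro v
    simp [d0, LinearMap.sum_apply]
  let a0 : Γ → Module.End ℂ V := fun s => LieModule.toEnd ℂ E V (A.emb (σ s) x)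
  have ha0 : ∀ s v, a0 s v = ⁅A.emb (σ s) x, v⁆ := fun s v => rfl
  have hdemb : ∀ i s v, ⁅A.d i, a0 s v⁆ = a0 s ⁅A.d i, v⁆ + ((σ s i : ℤ) : ℂ) • a0 s v := by
    intro i s v
    rw [ha0, ha0, leibniz_lie, A.d_bracket_emb, smul_lie, add_comm]
  have hDeg : ∀ s, NZLevel.Deg d0 (ι s) (a0 s) := by
    intro s v
    rw [hd0, hd0, map_sum, hι, ← hσφ s, hφ, Finset.sum_smul, ← Finset.sum_add_distrib]
    refine Finset.sum_congr rfl fun i _ => ?_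
    rw [hdemb, smul_add, map_smul, smul_smul, mul_comm (c i)]
  have haa : ∀ s v, a0 s (a0 (-s) v) - a0 (-s) (a0 s v) = (A.B x x * ι s) • v := by
    intro s v
    have h1 := A.emb_bracket_opp (σ s) x x
    rw [lie_self, map_zero, zero_add] at h1
    simp only [ha0]
    rw [← lie_lie, map_neg, h1, smul_lie, hKact, hσφ, smul_smul, hι]
  have hzz : ∀ s t r v, a0 r (a0 s (a0 t v) - a0 t (a0 s v))
      = a0 s (a0 t (a0 r v)) - a0 t (a0 s (a0 r v)) := by
    intro s t r v
    simp only [ha0]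
    rw [← lie_lie, ← lie_lie]
    have h1 := A.emb_bracket_mem (σ s) (σ t) x x
    rw [lie_self, map_zero, sub_zero] at h1
    have h2 := A.C_bracket_loop _ h1 (σ r) x
    rw [leibniz_lie, ← lie_skew, h2, neg_zero, zero_lie, zero_add]
  -- a nonzero weight space
  obtain ⟨μ, hμ⟩ : ∃ μ, A.dWeight V μ ≠ ⊥ := by
    by_contra! h
    have h1 := hqf.1
    simp only [h, iSup_bot] at h1
    have : v1 ∈ (⊥ : Submodule ℂ V) := h1 ▸ Submodule.mem_top
    exact hv1 (by simpa using this)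
  let X : Γ → Submodule ℂ V := fun s => A.dWeight V (fun i => μ i + ((σ s i : ℤ) : ℂ))
  have hXmem : ∀ s v, v ∈ X s ↔ ∀ i, ⁅A.d i, v⁆ = (μ i + ((σ s i : ℤ) : ℂ)) • v := fun s v => Iff.rfl
  let U : Submodule ℂ V := ⨆ s, X s
  let κ : ℂ := ∑ i, c i * μ i
  have hd0X : ∀ s, ∀ v ∈ X s, d0 v = (κ + ι s) • v := by
    intro s v hv
    rw [hXmem] at hv
    rw [hd0, hι, ← hσφ s, hφ, ← Finset.sum_add_distrib, Finset.sum_smul]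
    refine Finset.sum_congr rfl fun i _ => ?_
    rw [hv i, smul_smul]
    congr 1; ring
  have hdU : ∀ v ∈ U, d0 v ∈ U := by
    have : U ≤ U.comap d0 := iSup_le fun s v hv => by
      rw [Submodule.mem_comap, hd0X s v hv]
      exact Submodule.smul_mem _ _ (le_iSup X s hv)
    exact this
  have haU : ∀ s, ∀ v ∈ U, a0 s v ∈ U := by
    intro s
    have : U ≤ U.comap (a0 s) := iSup_le fun t v hv => by
      rw [Submodule.mem_comap]
      refine le_iSup X (t + s) ?_
      rw [hXmem] at *
      intro i
      rw [hdemb, hv i, map_smul, ← add_smul]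
      congr 1
      rw [map_add, Pi.add_apply]; push_cast; ring
    exact this
  let dU : Module.End ℂ U := d0.restrict hdU
  let aU : Γ → Module.End ℂ U := fun s => (a0 s).restrict (haU s)
  let W : ℂ → Submodule ℂ U := fun l => ⨆ s : Γ, ⨆ (_ : κ + ι s = l), (X s).comap U.subtype
  have hWle : ∀ l, W l ≤ dU.eigenspace l := by
    intro l
    refine iSup₂_le fun s hs v hv => ?_
    rw [Module.End.mem_eigenspace_iff]
    apply Subtype.ext
    show d0 v = l • (v : V)
    rw [hd0X s v hv, hs]
  have hXtop : (⨆ s, (X s).comap U.subtype) = ⊤ := by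
    apply Submodule.map_injective_of_injective U.subtype_injective
    rw [Submodule.map_iSup, Submodule.map_top, Submodule.range_subtype]
    refine iSup_congr fun s => ?_
    rw [Submodule.map_comap_subtype]
    exact inf_eq_right.2 (le_iSup X s)
  have hWtop : (⨆ l, W l) = ⊤ := by
    rw [eq_top_iff, ← hXtop]
    refine iSup_le fun s => ?_
    exact le_iSup_of_le (κ + ι s) (le_iSup₂_of_le (f := fun s' (_ : κ + ι s' = κ + ι s) =>
      (X s').comap U.subtype) s rfl le_rfl)
  have hWfd : ∀ l, FiniteDimensional ℂ (W l) := by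
    intro l
    by_cases h : ∃ s, κ + ι s = l
    · obtain ⟨s, hs⟩ := h
      have hle : W l ≤ (X s).comap U.subtype := by
        refine iSup₂_le fun s' hs' => ?_
        have : s' = s := hιinj (add_left_cancel (hs'.trans hs.symm))
        rw [this]
      have hfX : FiniteDimensional ℂ (X s) := hqf.2 _
      have hf : FiniteDimensional ℂ ((X s).comap U.subtype) := by
        have hm : ∀ v ∈ (X s).comap U.subtype, U.subtype v ∈ X s := fun v hv => hv
        refine FiniteDimensional.of_injective (V₂ := X s) (U.subtype.restrict hm) ?_
        intro p q hpq
        have h3 : ((p : U) : V) = ((q : U) : V) := congrArg (fun w : X s => (w : V)) hpq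
        exact Subtype.ext (Subtype.ext h3)
      exact Submodule.finiteDimensional_of_le hle
    · have : W l = ⊥ := by
        rw [eq_bot_iff]
        exact iSup₂_le fun s hs => absurd ⟨s, hs⟩ h
      rw [this]
      infer_instance
  have HU : NZLevel.HSys ι (A.B x x) U dU aU := by
    refine ⟨fun s v => Subtype.ext (hDeg s v), fun s v => Subtype.ext (haa s v),
      fun s t r v => Subtype.ext (hzz s t r v), fun l => ?_⟩
    rw [NZLevel.eigenspace_eq_of_le dU W hWle hWtop l]
    exact hWfd l
  have htopU : (⨆ l, dU.eigenspace l) = ⊤ := by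
    rw [eq_top_iff, ← hWtop]
    exact iSup_mono hWle
  have hnt : Nontrivial U := by
    obtain ⟨v, hv, hv0⟩ := (Submodule.ne_bot_iff _).1 hμ
    have hvX : v ∈ X 0 := by
      rw [hXmem]
      intro i
      rw [map_zero]
      simpa using hv i
    exact ⟨⟨v, le_iSup X 0 hvX⟩, 0, fun h => hv0 (congrArg Subtype.val h)⟩
  obtain ⟨e, he⟩ := HU.cyclic' hιinj hx htopU
  have hcyc : ∀ k, ∃ m : ℤ, φ k = m • φ (σ e) := by
    intro k
    obtain ⟨m, hm⟩ := AddSubgroup.mem_zmultiples_iff.1 (he ⟨φ k, k, rfl⟩)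
    refine ⟨m, ?_⟩
    rw [hσφ]
    have := congrArg Subtype.val hm
    simpa using this.symm
  have hye : φ (σ e) ≠ 0 := by
    intro h
    obtain ⟨m, hm⟩ := hcyc (Pi.single i0 1)
    rw [h, smul_zero] at hm
    exact hk0 hm
  obtain ⟨P, hP, hP0, hPj⟩ := NZLevel.exists_matrix φ (σ e) hye hcyc
  refine ⟨P, hP, ?_, fun j hj => ?_⟩
  · rw [hφ] at hP0; exact hP0
  · have := hPj j hj
    rw [hφ] at this; exact this

end
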